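/- Let R = R_j (j = 1 or 2) be a Riesz transform on 𝕋². Then there is a constant C such that for every φ ∈ H³(𝕋²) and every mean-zero θ ∈ Ḣ^{−1/2}(𝕋²), the commutator [R, φ]θ = R(φθ) − φ Rθ belongs to Ḣ^{1/2}(𝕋²) and ‖[R, φ]θ‖_{Ḣ^{1/2}} ≤ C ‖φ‖_{Ḣ³} ‖θ‖_{Ḣ^{−1/2}}. -/

import Mathlib

open MeasureTheory Complex Filter
open scoped ENNReal NNReal

noncomputable section

abbrev Z2 := ℤ × ℤ

/-- dot product of an integer frequency with a point of `ℝ²` -/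
def dotZ (k : Z2) (x : ℝ × ℝ) : ℝ := (k.1 : ℝ) * x.1 + (k.2 : ℝ) * x.2

/-- Euclidean norm of an integer frequency -/
def knorm (k : Z2) : ℝ := Real.sqrt ((k.1 : ℝ) ^ 2 + (k.2 : ℝ) ^ 2)

/-- Euclidean norm on `ℝ²` (realized as `ℝ × ℝ`) -/
def e2 (x : ℝ × ℝ) : ℝ := Real.sqrt (x.1 ^ 2 + x.2 ^ 2)

/-- the fundamental domain `[-π, π]²` of the torus -/
def Q2 : Set (ℝ × ℝ) := Set.Icc (-Real.pi, -Real.pi) (Real.pi, Real.pi)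

/-- `2π`-periodicity in both variables -/
def Periodic2 (f : ℝ × ℝ → ℂ) : Prop :=
  ∀ x : ℝ × ℝ, f (x.1 + 2 * Real.pi, x.2) = f x ∧ f (x.1, x.2 + 2 * Real.pi) = f x

def RealValued (f : ℝ × ℝ → ℂ) : Prop := ∀ x, (f x).im = 0

/-- Fourier coefficient `f̂(k) = (2π)⁻² ∫_{𝕋²} f(x) e^{-ik⋅x} dx` -/
def fCoeff (f : ℝ × ℝ → ℂ) (k : Z2) : ℂ :=
  (1 / (2 * Real.pi) ^ 2 : ℂ) * ∫ x in Q2, f x * Complex.exp (-Complex.I * (dotZ k x : ℝ))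

/-- Fourier multiplier operator with symbol `m` -/
def Tmult (m : Z2 → ℂ) (f : ℝ × ℝ → ℂ) : ℝ × ℝ → ℂ :=
  fun x => ∑' k : Z2, m k * fCoeff f k * Complex.exp (Complex.I * (dotZ k x : ℝ))

/-- `Λ^s = (-Δ)^{s/2}`, the multiplier with symbol `|k|^s` (killing `k = 0` for `s ≤ 0`) -/
def Lam (s : ℝ) : (ℝ × ℝ → ℂ) → (ℝ × ℝ → ℂ) :=
  Tmult fun k => if k = 0 then 0 else ((knorm k ^ s : ℝ) : ℂ)

/-- symbol of the Riesz transform `R_j`, `i k_j / |k|` -/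
def rieszSym (j : Fin 2) (k : Z2) : ℂ :=
  if k = 0 then 0
  else Complex.I * ((if j = 0 then (k.1 : ℝ) else (k.2 : ℝ)) : ℂ) / ((knorm k : ℝ) : ℂ)

/-- the Riesz transform `R_j` -/
def Riesz (j : Fin 2) : (ℝ × ℝ → ℂ) → (ℝ × ℝ → ℂ) := Tmult (rieszSym j)

/-- symbol of the modified Riesz-type transforms `R_j^o` of Lemma 2.2 -/
def RoSym (j : Fin 2) (k : Z2) : ℝ :=
  if k = 0 then 0
  else if j = 0 then 25 * ((k.2 : ℝ) ^ 2 - (k.1 : ℝ) ^ 2) / (12 * ((k.1 : ℝ) ^ 2 + (k.2 : ℝ) ^ 2))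
  else 7 * ((k.2 : ℝ) ^ 2 - (k.1 : ℝ) ^ 2) / (12 * ((k.1 : ℝ) ^ 2 + (k.2 : ℝ) ^ 2))
      + 4 * (k.1 : ℝ) * (k.2 : ℝ) / ((k.1 : ℝ) ^ 2 + (k.2 : ℝ) ^ 2)

/-- the Riesz-type transforms `R_j^o` -/
def Ro (j : Fin 2) : (ℝ × ℝ → ℂ) → (ℝ × ℝ → ℂ) := Tmult fun k => ((RoSym j k : ℝ) : ℂ)

/-- symbol of `Δ⁻¹` (mean annihilated) -/
def deltaInvSym (k : Z2) : ℂ := if k = 0 then 0 else -1 / ((knorm k ^ 2 : ℝ) : ℂ)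

/-- directional derivative `(v ⋅ ∇) f` -/
def dirD (v : ℝ × ℝ) (f : ℝ × ℝ → ℂ) : ℝ × ℝ → ℂ := fun x => fderiv ℝ f x v

/-- partial derivative `∂_j f` -/
def pd (j : Fin 2) (f : ℝ × ℝ → ℂ) : ℝ × ℝ → ℂ :=
  dirD (if j = 0 then ((1 : ℝ), (0 : ℝ)) else ((0 : ℝ), (1 : ℝ))) f

/-- sup norm on the torus -/
def supNorm (f : ℝ × ℝ → ℂ) : ℝ := ⨆ x : ℝ × ℝ, ‖f x‖

/-- the `X`-norm `‖q‖_X = ‖q‖_∞ + ‖R₁^o q‖_∞ + ‖R₂^o q‖_∞` -/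
def Xnorm (q : ℝ × ℝ → ℂ) : ℝ := supNorm q + supNorm (Ro 0 q) + supNorm (Ro 1 q)

/-- the vectors `l₁ = (3/5, 4/5)` and `l₂ = (1,0)` -/
def l1 : ℝ × ℝ := (3 / 5, 4 / 5)
def l2 : ℝ × ℝ := (1, 0)

/-- the rotation `l ↦ l^⊥` -/
def perp (l : ℝ × ℝ) : ℝ × ℝ := (-l.2, l.1)

/-- symbol view of frequencies as real vectors -/
def toR (k : Z2) : ℝ × ℝ := ((k.1 : ℝ), (k.2 : ℝ))

/-- the operator `T^{(1)}_{λl}` (where `κ = λl ∈ ℤ²`) -/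
def T1op (κ : Z2) (lam : ℝ) : (ℝ × ℝ → ℂ) → (ℝ × ℝ → ℂ) :=
  Tmult fun k => (((knorm (κ + k) + knorm (κ - k)) / 2 - lam : ℝ) : ℂ)

/-- the operator `T^{(2)}_{λl}` (where `κ = λl ∈ ℤ²`) -/
def T2op (κ : Z2) (l : ℝ × ℝ) : (ℝ × ℝ → ℂ) → (ℝ × ℝ → ℂ) :=
  Tmult fun k =>
    Complex.I * (((knorm (κ + k) - knorm (κ - k)) / 2 - (l.1 * (k.1 : ℝ) + l.2 * (k.2 : ℝ)) : ℝ) : ℂ)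

/-- the functions `a_j = 2 √(r/den) √(C₀ + R_j^o q / r)` -/
def aPerf (q : ℝ × ℝ → ℂ) (r den C₀ : ℝ) (j : Fin 2) : ℝ × ℝ → ℂ :=
  fun x => ((2 * Real.sqrt (r / den) * Real.sqrt (C₀ + (Ro j q x).re / r) : ℝ) : ℂ)

/-- `λ_n = ⌈λ₀^{bⁿ}⌉` -/
def lamSeq (lam0 : ℕ) (b : ℝ) (n : ℕ) : ℕ := ⌈((lam0 : ℝ)) ^ (b ^ n)⌉₊

/-- `r_n = λ_n^{-β}` -/
def rSeq (lam0 : ℕ) (b β : ℝ) (n : ℕ) : ℝ := ((lamSeq lam0 b n : ℝ)) ^ (-β)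

/-- `μ_{n+1} = (λ_n λ_{n+1})^{1/2}` -/
def muSeq (lam0 : ℕ) (b : ℝ) (n : ℕ) : ℝ :=
  Real.sqrt ((lamSeq lam0 b n : ℝ) * (lamSeq lam0 b (n + 1) : ℝ))

/-- smooth Fourier cutoff `P_{≤μ}` associated to a bump `ψ` -/
def Pcut (ψ : ℝ × ℝ → ℝ) (μ : ℝ) : (ℝ × ℝ → ℂ) → (ℝ × ℝ → ℂ) :=
  Tmult fun k => ((ψ ((k.1 : ℝ) / μ, (k.2 : ℝ) / μ) : ℝ) : ℂ)

/-- bilinear multiplier with symbol the Fourier transform of a kernel `K ∈ L¹(ℝ²×ℝ²)` -/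
def mOf (K : (ℝ × ℝ) × (ℝ × ℝ) → ℂ) (ξ η : ℝ × ℝ) : ℂ :=
  ∫ z : (ℝ × ℝ) × (ℝ × ℝ),
    K z * Complex.exp (-Complex.I * ((ξ.1 * z.1.1 + ξ.2 * z.1.2 + η.1 * z.2.1 + η.2 * z.2.2 : ℝ) : ℂ))

/-- the bilinear multiplier operator associated to a kernel `K ∈ L¹(ℝ²×ℝ²)` -/
def Tbil (K : (ℝ × ℝ) × (ℝ × ℝ) → ℂ) (f g : ℝ × ℝ → ℂ) : ℝ × ℝ → ℂ :=
  fun x => ∑' k : Z2,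
    (∑' k' : Z2, mOf K (toR k') (toR (k - k')) * fCoeff f k' * fCoeff g (k - k'))
      * Complex.exp (Complex.I * (dotZ k x : ℝ))

/-- Fourier coefficients of the commutator `[R_j, φ]θ`, computed from those of `φ` and `θ` -/
def commCoeff (j : Fin 2) (φh c : Z2 → ℂ) (k : Z2) : ℂ :=
  ∑' k' : Z2, (rieszSym j k - rieszSym j k') * φh (k - k') * c k'


/-- frequency as a complex number -/
def zc (k : Z2) : ℂ := (k.1 : ℝ) + (k.2 : ℝ) * Complex.I

lemma zc_re (k : Z2) : (zc k).re = k.1 := by simp [zc]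
lemma zc_im (k : Z2) : (zc k).im = k.2 := by simp [zc]
lemma zc_sub (k l : Z2) : zc (k - l) = zc k - zc l := by
  apply Complex.ext <;> simp [zc]

lemma knorm_eq (k : Z2) : knorm k = ‖zc k‖ := by
  rw [knorm, zc, Complex.norm_add_mul_I]

lemma knorm_nonneg (k : Z2) : 0 ≤ knorm k := Real.sqrt_nonneg _

lemma knorm_sq (k : Z2) : knorm k ^ 2 = (k.1 : ℝ) ^ 2 + (k.2 : ℝ) ^ 2 :=
  Real.sq_sqrt (by positivity)

lemma knorm_zero : knorm 0 = 0 := by simp [knorm]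

lemma one_le_knorm_sq {k : Z2} (hk : k ≠ 0) : 1 ≤ knorm k ^ 2 := by
  rw [knorm_sq]
  have h : (1 : ℤ) ≤ k.1 ^ 2 + k.2 ^ 2 := by
    by_contra h
    apply hk
    have h0 : k.1 ^ 2 + k.2 ^ 2 = 0 := by nlinarith [sq_nonneg k.1, sq_nonneg k.2]
    have h1 : k.1 = 0 := by nlinarith [sq_nonneg k.1, sq_nonneg k.2]
    have h2 : k.2 = 0 := by nlinarith [sq_nonneg k.1, sq_nonneg k.2]
    exact Prod.ext h1 h2
  exact_mod_cast h

lemma knorm_pos {k : Z2} (hk : k ≠ 0) : 0 < knorm k := by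
  have := one_le_knorm_sq hk
  rcases (knorm_nonneg k).eq_or_lt with h | h
  · rw [← h] at this; norm_num at this
  · exact h

/-- the chosen coordinate -/
def coord (j : Fin 2) (k : Z2) : ℝ := if j = 0 then (k.1 : ℝ) else (k.2 : ℝ)

lemma coord_sub (j : Fin 2) (k l : Z2) : coord j (k - l) = coord j k - coord j l := by
  unfold coord; split_ifs <;> simp

lemma abs_coord_le (j : Fin 2) (k : Z2) : |coord j k| ≤ knorm k := by
  rw [knorm_eq]; unfold coord
  split_ifs
  · rw [← zc_re]; exact Complex.abs_re_le_norm _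
  · rw [← zc_im]; exact Complex.abs_im_le_norm _

lemma rieszSym_eq (j : Fin 2) {k : Z2} (hk : k ≠ 0) :
    rieszSym j k = Complex.I * ((coord j k / knorm k : ℝ) : ℂ) := by
  unfold rieszSym coord
  rw [if_neg hk]
  split_ifs <;> push_cast <;> ring

lemma real_aux {x y r s d : ℝ} (hr : 0 < r) (hs : 0 < s) (hxr : |x| ≤ r) (hys : |y| ≤ s)
    (hxy : |x - y| ≤ d) (hrs : |r - s| ≤ d) :
    |x / r - y / s| * (√r * √s) ≤ 2 * d := by
  have e : x / r - y / s = (x * s - y * r) / (r * s) := by field_simp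
  have hd : 0 ≤ d := (abs_nonneg _).trans hxy
  have hrs0 : 0 < r * s := mul_pos hr hs
  rw [e, abs_div, abs_of_pos hrs0, div_mul_eq_mul_div, div_le_iff₀ hrs0]
  have h1 : |x * s - y * r| ≤ 2 * d * s := by
    calc |x * s - y * r| = |(x - y) * s + y * (s - r)| := by ring_nf
      _ ≤ |(x - y) * s| + |y * (s - r)| := abs_add_le _ _
      _ = |x - y| * s + |y| * |r - s| := by rw [abs_mul, abs_mul, abs_of_pos hs, abs_sub_comm s r]
      _ ≤ d * s + s * d := by gcongr
      _ = _ := by ring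
  have h2 : |x * s - y * r| ≤ 2 * d * r := by
    calc |x * s - y * r| = |(x - y) * r + x * (s - r)| := by ring_nf
      _ ≤ |(x - y) * r| + |x * (s - r)| := abs_add_le _ _
      _ = |x - y| * r + |x| * |r - s| := by rw [abs_mul, abs_mul, abs_of_pos hr, abs_sub_comm s r]
      _ ≤ d * r + r * d := by gcongr
      _ = _ := by ring
  rcases le_total r s with h | h
  · have h3 : √r * √s ≤ s := by
      calc √r * √s ≤ √s * √s := by gcongr
        _ = s := Real.mul_self_sqrt hs.le
    calc _ ≤ 2 * d * r * s := by gcongr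
      _ = _ := by ring
  · have h3 : √r * √s ≤ r := by
      calc √r * √s ≤ √r * √r := by gcongr
        _ = r := Real.mul_self_sqrt hr.le
    calc _ ≤ 2 * d * s * r := by gcongr
      _ = _ := by ring

lemma sym_bound (j : Fin 2) {k l : Z2} (hk : k ≠ 0) (hl : l ≠ 0) :
    ‖rieszSym j k - rieszSym j l‖ * (√(knorm k) * √(knorm l)) ≤ 2 * knorm (k - l) := by
  rw [rieszSym_eq j hk, rieszSym_eq j hl, ← mul_sub, ← Complex.ofReal_sub, norm_mul,
    Complex.norm_I, one_mul, Complex.norm_real, Real.norm_eq_abs]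
  refine real_aux (knorm_pos hk) (knorm_pos hl) (abs_coord_le j k) (abs_coord_le j l) ?_ ?_
  · rw [← coord_sub]; exact abs_coord_le j _
  · rw [knorm_eq, knorm_eq, knorm_eq, zc_sub]; exact abs_norm_sub_norm_le _ _

lemma tsum_cs {ι : Type*} {f g : ι → ℝ} (hf : ∀ i, 0 ≤ f i) (hg : ∀ i, 0 ≤ g i)
    (hf2 : Summable fun i => f i ^ 2) (hg2 : Summable fun i => g i ^ 2) :
    Summable (fun i => f i * g i) ∧
      (∑' i, f i * g i) ^ 2 ≤ (∑' i, f i ^ 2) * ∑' i, g i ^ 2 := by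
  have h := Real.inner_le_Lp_mul_Lq_tsum_of_nonneg (p := 2) (q := 2)
    (Real.HolderConjugate.two_two) hf hg
    (by simpa using hf2) (by simpa using hg2)
  refine ⟨Real.summable_mul_of_Lp_Lq_of_nonneg (p := 2) (q := 2)
    (Real.HolderConjugate.two_two) hf hg
    (by simpa using hf2) (by simpa using hg2), ?_⟩
  have h2 := h
  simp only [Real.rpow_two, ← Real.sqrt_eq_rpow] at h2
  have h0 : 0 ≤ ∑' i, f i * g i := tsum_nonneg fun i => mul_nonneg (hf i) (hg i)
  calc _ ≤ (√(∑' i, f i ^ 2) * √(∑' i, g i ^ 2)) ^ 2 := by gcongr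
    _ = _ := by
      rw [mul_pow, Real.sq_sqrt (tsum_nonneg fun i => sq_nonneg _),
        Real.sq_sqrt (tsum_nonneg fun i => sq_nonneg _)]

lemma summable_one_add_sq : Summable fun n : ℤ => (1 + (n : ℝ) ^ 2)⁻¹ := by
  have h1 : Summable fun n : ℤ => 1 / (n : ℝ) ^ 2 :=
    Real.summable_one_div_int_pow.mpr (by norm_num)
  have h2 : Summable fun n : ℤ => if n = 0 then (1 : ℝ) else 0 :=
    (hasSum_ite_eq (0 : ℤ) (1 : ℝ)).summable
  refine Summable.of_nonneg_of_le (fun n => by positivity) (fun n => ?_) (h1.add h2)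
  by_cases hn : n = 0
  · simp [hn]
  · have : (0 : ℝ) < (n : ℝ) ^ 2 := by positivity
    simp only [hn, if_false, add_zero, one_div]
    gcongr
    linarith

lemma summable_knorm : Summable fun k : Z2 => ((knorm k ^ 2)⁻¹) ^ 2 := by
  have h : Summable fun k : ℤ × ℤ => (1 + (k.1 : ℝ) ^ 2)⁻¹ * (1 + (k.2 : ℝ) ^ 2)⁻¹ :=
    summable_one_add_sq.mul_of_nonneg summable_one_add_sq (fun n => by positivity)
      (fun n => by positivity)
  refine Summable.of_nonneg_of_le (fun n => by positivity) (fun k => ?_) (h.mul_left 3)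
  by_cases hk : k = 0
  · simp [hk, knorm_zero]
  · have h1 := one_le_knorm_sq hk
    have h2 := knorm_sq k
    have hp : 0 < knorm k ^ 2 := by linarith
    rw [← mul_inv, inv_pow, inv_le_comm₀ (by positivity) (by positivity), mul_inv, inv_inv,
      inv_mul_le_iff₀ (by norm_num), h2]
    rw [h2] at h1
    nlinarith [sq_nonneg ((k.1 : ℝ) ^ 2 - (k.2 : ℝ) ^ 2), sq_nonneg (k.1 : ℝ), sq_nonneg (k.2 : ℝ)]

lemma young {a b : Z2 → ℝ} (ha : ∀ k, 0 ≤ a k) (hb : ∀ k, 0 ≤ b k)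
    (hsa : Summable a) (hsb : Summable fun k => b k ^ 2) :
    (∀ k, Summable fun l => a (k - l) * b l) ∧
    Summable (fun k => (∑' l, a (k - l) * b l) ^ 2) ∧
    ∑' k, (∑' l, a (k - l) * b l) ^ 2 ≤ (∑' k, a k) ^ 2 * ∑' k, b k ^ 2 := by
  let e : Z2 × Z2 ≃ Z2 × Z2 :=
    { toFun := fun p => (p.1 - p.2, p.2)
      invFun := fun p => (p.1 + p.2, p.2)
      left_inv := fun p => by simp
      right_inv := fun p => by simp }
  have hP : Summable fun p : Z2 × Z2 => a p.1 * b p.2 ^ 2 :=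
    hsa.mul_of_nonneg hsb ha (fun k => sq_nonneg _)
  have hQ : Summable fun p : Z2 × Z2 => a (p.1 - p.2) * b p.2 ^ 2 := e.summable_iff.mpr hP
  have hW := hQ.prod
  have hWk : ∀ k, Summable fun l => a (k - l) * b l ^ 2 := fun k => hQ.prod_factor k
  have hsum : ∑' k, ∑' l, a (k - l) * b l ^ 2 = (∑' k, a k) * ∑' k, b k ^ 2 := by
    rw [← hQ.tsum_prod, hsa.tsum_mul_tsum hsb hP]
    exact e.tsum_eq (fun p : Z2 × Z2 => a p.1 * b p.2 ^ 2)
  have key : ∀ k, Summable (fun l => a (k - l) * b l) ∧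
      (∑' l, a (k - l) * b l) ^ 2 ≤ (∑' k, a k) * ∑' l, a (k - l) * b l ^ 2 := by
    intro k
    have hak : Summable fun l => a (k - l) := (Equiv.subLeft k).summable_iff.mpr hsa
    have hakt : ∑' l, a (k - l) = ∑' l, a l := (Equiv.subLeft k).tsum_eq a
    have e1 : ∀ l, √(a (k - l)) ^ 2 = a (k - l) := fun l => Real.sq_sqrt (ha _)
    have e2 : ∀ l, (√(a (k - l)) * b l) ^ 2 = a (k - l) * b l ^ 2 := fun l => by
      rw [mul_pow, e1]
    have e3 : ∀ l, √(a (k - l)) * (√(a (k - l)) * b l) = a (k - l) * b l := fun l => by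
      rw [← mul_assoc, Real.mul_self_sqrt (ha _)]
    have h := tsum_cs (f := fun l => √(a (k - l))) (g := fun l => √(a (k - l)) * b l)
      (fun l => Real.sqrt_nonneg _) (fun l => mul_nonneg (Real.sqrt_nonneg _) (hb l))
      (by simpa only [e1] using hak) (by simpa only [e2] using hWk k)
    simp only [e1, e2, e3, hakt] at h
    exact h
  have hS : Summable (fun k => (∑' l, a (k - l) * b l) ^ 2) :=
    Summable.of_nonneg_of_le (fun k => sq_nonneg _) (fun k => (key k).2) (hW.mul_left _)
  refine ⟨fun k => (key k).1, hS, ?_⟩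
  calc _ ≤ ∑' k, (∑' k, a k) * ∑' l, a (k - l) * b l ^ 2 :=
        hS.tsum_le_tsum (fun k => (key k).2) (hW.mul_left _)
    _ = _ := by rw [tsum_mul_left, hsum]; ring

/-- Proposition B.1: for `φ ∈ H³` and mean-zero `θ ∈ Ḣ^{-1/2}`, the commutator
`[R_j, φ]θ` lies in `Ḣ^{1/2}` with `‖[R_j,φ]θ‖_{Ḣ^{1/2}} ≤ C ‖φ‖_{Ḣ³} ‖θ‖_{Ḣ^{-1/2}}`.
Everything is expressed via Fourier coefficients: `φh = φ̂`, `θh = θ̂`, and the commutator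
has coefficients `commCoeff j φh θh`. -/
theorem stmt16 (j : Fin 2) : ∃ C : ℝ, ∀ φh θh : Z2 → ℂ,
    θh 0 = 0 →
    Summable (fun k : Z2 => (1 + knorm k) ^ (6 : ℕ) * ‖φh k‖ ^ 2) →
    Summable (fun k : Z2 => (knorm k)⁻¹ * ‖θh k‖ ^ 2) →
    Summable (fun k : Z2 => knorm k * ‖commCoeff j φh θh k‖ ^ 2) ∧
    Real.sqrt (∑' k : Z2, knorm k * ‖commCoeff j φh θh k‖ ^ 2)
      ≤ C * Real.sqrt (∑' k : Z2, knorm k ^ (6 : ℕ) * ‖φh k‖ ^ 2)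
          * Real.sqrt (∑' k : Z2, (knorm k)⁻¹ * ‖θh k‖ ^ 2) := by
  refine ⟨2 * √(∑' k : Z2, ((knorm k ^ 2)⁻¹) ^ 2), fun φh θh hθ0 hφ hθ => ?_⟩
  set a : Z2 → ℝ := fun k => knorm k * ‖φh k‖ with ha_def
  set b : Z2 → ℝ := fun k => (√(knorm k))⁻¹ * ‖θh k‖ with hb_def
  have ha : ∀ k, 0 ≤ a k := fun k => mul_nonneg (knorm_nonneg k) (norm_nonneg _)
  have hb : ∀ k, 0 ≤ b k := fun k => by positivity
  have hb2 : ∀ k, b k ^ 2 = (knorm k)⁻¹ * ‖θh k‖ ^ 2 := fun k => by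
    simp only [hb_def]
    rw [mul_pow, inv_pow, Real.sq_sqrt (knorm_nonneg k)]
  have hsb : Summable fun k => b k ^ 2 := by simpa only [hb2] using hθ
  have hφ6 : Summable fun k : Z2 => knorm k ^ (6 : ℕ) * ‖φh k‖ ^ 2 := by
    refine Summable.of_nonneg_of_le (fun k => ?_) (fun k => ?_) hφ
    · have := knorm_nonneg k; positivity
    · have := knorm_nonneg k
      gcongr
      linarith
  have e1 : ∀ k : Z2, (knorm k ^ 3 * ‖φh k‖) ^ 2 = knorm k ^ (6 : ℕ) * ‖φh k‖ ^ 2 :=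
    fun k => by ring
  have e2 : ∀ k : Z2, (knorm k ^ 2)⁻¹ * (knorm k ^ 3 * ‖φh k‖) = a k := fun k => by
    by_cases hk : k = 0
    · simp [hk, ha_def, knorm_zero]
    · have := knorm_pos hk
      simp only [ha_def]
      field_simp
  have hcs := tsum_cs (f := fun k : Z2 => (knorm k ^ 2)⁻¹) (g := fun k => knorm k ^ 3 * ‖φh k‖)
    (fun k => by positivity)
    (fun k => by have := knorm_nonneg k; positivity) summable_knorm
    (by simpa only [e1] using hφ6)
  simp only [e1, e2] at hcs
  obtain ⟨hsa, hA⟩ := hcs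
  obtain ⟨hS1, hS2, hS3⟩ := young ha hb hsa hsb
  have hpt : ∀ k, knorm k * ‖commCoeff j φh θh k‖ ^ 2 ≤ 4 * (∑' l, a (k - l) * b l) ^ 2 := by
    intro k
    by_cases hk : k = 0
    · rw [hk, knorm_zero, zero_mul]; positivity
    have hkp := knorm_pos hk
    have hsk : 0 < √(knorm k) := Real.sqrt_pos.mpr hkp
    have hterm : ∀ l, ‖(rieszSym j k - rieszSym j l) * φh (k - l) * θh l‖
        ≤ 2 * (√(knorm k))⁻¹ * (a (k - l) * b l) := by
      intro l
      by_cases hl : l = 0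
      · simp [hl, hθ0, hb_def]
      have hsl : 0 < √(knorm l) := Real.sqrt_pos.mpr (knorm_pos hl)
      have h := sym_bound j hk hl
      rw [← le_div_iff₀ (by positivity)] at h
      rw [norm_mul, norm_mul]
      calc _ ≤ 2 * knorm (k - l) / (√(knorm k) * √(knorm l)) * ‖φh (k - l)‖ * ‖θh l‖ := by
            gcongr
        _ = _ := by
            simp only [ha_def, hb_def]
            field_simp
    have hn : ‖commCoeff j φh θh k‖ ≤ 2 * (√(knorm k))⁻¹ * ∑' l, a (k - l) * b l :=
      tsum_of_norm_bounded ((hS1 k).hasSum.mul_left _) hterm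
    calc _ ≤ knorm k * (2 * (√(knorm k))⁻¹ * ∑' l, a (k - l) * b l) ^ 2 := by gcongr
      _ = _ := by
        rw [mul_pow, mul_pow, inv_pow, Real.sq_sqrt hkp.le]
        field_simp
        ring
  have hfin : Summable (fun k : Z2 => knorm k * ‖commCoeff j φh θh k‖ ^ 2) :=
    Summable.of_nonneg_of_le (fun k => mul_nonneg (knorm_nonneg k) (sq_nonneg _)) hpt
      (hS2.mul_left 4)
  refine ⟨hfin, ?_⟩
  have hB0 : 0 ≤ ∑' k : Z2, (knorm k)⁻¹ * ‖θh k‖ ^ 2 :=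
    tsum_nonneg fun k => by rw [← hb2]; positivity
  have hP0 : 0 ≤ ∑' k : Z2, knorm k ^ (6 : ℕ) * ‖φh k‖ ^ 2 :=
    tsum_nonneg fun k => by rw [← e1]; positivity
  have hK0 : 0 ≤ ∑' k : Z2, ((knorm k ^ 2)⁻¹) ^ 2 := tsum_nonneg fun k => by positivity
  apply Real.sqrt_le_iff.mpr
  refine ⟨by positivity, ?_⟩
  rw [mul_pow, mul_pow, mul_pow, Real.sq_sqrt hB0, Real.sq_sqrt hP0, Real.sq_sqrt hK0]
  simp only [hb2] at hS3
  calc _ ≤ ∑' k, 4 * (∑' l, a (k - l) * b l) ^ 2 := hfin.tsum_le_tsum hpt (hS2.mul_left 4)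
    _ = 4 * ∑' k, (∑' l, a (k - l) * b l) ^ 2 := tsum_mul_left
    _ ≤ 4 * ((∑' k, a k) ^ 2 * ∑' k : Z2, (knorm k)⁻¹ * ‖θh k‖ ^ 2) := by gcongr
    _ ≤ 4 * (((∑' k : Z2, ((knorm k ^ 2)⁻¹) ^ 2) * ∑' k : Z2, knorm k ^ (6 : ℕ) * ‖φh k‖ ^ 2)
          * ∑' k : Z2, (knorm k)⁻¹ * ‖θh k‖ ^ 2) := by gcongr
    _ = _ := by ring

end
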